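/- arXiv:2309.06686 — 2 statements merged into one kernel-verified Lean document; each statement's English description precedes it below -/
import Mathlib

section
/- For every natural number N ≥ 6, the 6×6 real symmetric matrix T_N(0) (i.e. T_N(x) evaluated at x = (0,0,0)) is positive definite. -/
open Matrix

noncomputable section

/-- `a = 2^{-N}` -/
def a (N : ℕ) : ℝ := (2 : ℝ)⁻¹ ^ N

/-- `b = (-2)^{-N}` -/
def b (N : ℕ) : ℝ := (-2 : ℝ)⁻¹ ^ N

/-- `c = (2/3)^N` -/
def c (N : ℕ) : ℝ := (2 / 3 : ℝ) ^ N

def M1 (N : ℕ) : Matrix (Fin 3) (Fin 3) ℝ :=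
  !![1, a N, a N; a N, 1, b N; a N, b N, 1]

def δ1 (N : ℕ) : Matrix (Fin 3) (Fin 3) ℝ :=
  !![0, a N, a N; a N, (a N) ^ 2, (a N) ^ 2; a N, (a N) ^ 2, (a N) ^ 2]

def δ2 (N : ℕ) : Matrix (Fin 3) (Fin 3) ℝ :=
  !![(a N) ^ 2, a N, a N * b N; a N, 0, b N; a N * b N, b N, (b N) ^ 2]

def δ3 (N : ℕ) : Matrix (Fin 3) (Fin 3) ℝ :=
  !![(a N) ^ 2, a N * b N, a N; a N * b N, (b N) ^ 2, b N; a N, b N, 0]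

def Mx (N : ℕ) : Matrix (Fin 3) (Fin 3) ℝ :=
  (Real.sqrt 3 * c N) • (!![0, 0, 0; 0, -1, 0; 0, 0, 1] + δ3 N - δ2 N)

def Mz (N : ℕ) : Matrix (Fin 3) (Fin 3) ℝ :=
  c N • (!![-2, 0, 0; 0, 1, 0; 0, 0, 1] - (2 : ℝ) • δ1 N + δ2 N + δ3 N)

def S (x : Fin 3 → ℝ) : Matrix (Fin 3) (Fin 3) ℝ :=
  !![0, x 0, x 1; -x 0, 0, x 2; -x 1, -x 2, 0]

/-- The 6×6 Choi-matrix representation `T_N(x)` in 2×2 block form. -/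
def T (N : ℕ) (x : Fin 3 → ℝ) : Matrix (Fin 3 ⊕ Fin 3) (Fin 3 ⊕ Fin 3) ℝ :=
  Matrix.fromBlocks (M1 N + Mz N) (Mx N + S x) (Mx N - S x) (M1 N - Mz N)

end

/-!
Let `G = M1 N` be the Gram matrix, with columns `g₀, g₁, g₂`. Then
`T N 0 = 1 ⊗ G + 2c ∑ₖ Fₖ ⊗ gₖ gₖᵀ`, where `F₀, F₁, F₂` are reflections of the plane whose axes
are 60° apart. As `∑ₖ gₖ gₖᵀ = G²`, this equals
`1 ⊗ (G - 2c G²) + 2c ∑ₖ (1 + Fₖ) ⊗ gₖ gₖᵀ`. The sum is positive semidefinite since reflections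
satisfy `Fₖ ≥ -1`, and `G - 2c G²` is positive definite because `G` is so close to the identity
that its eigenvalues lie strictly between `0` and `1 / (2c)`.
-/

open scoped Kronecker ComplexOrder

theorem sum_vecMulVec_col_star {m n R : Type*} [Fintype n] [NonUnitalNonAssocSemiring R] [Star R]
    (A : Matrix m n R) : ∑ k, vecMulVec (A.col k) (star (A.col k)) = A * Aᴴ := by
  ext i j
  simp [Matrix.sum_apply, mul_apply, vecMulVec_apply]

section PositiveDefinite

variable {n 𝕜 : Type*} [Fintype n] [DecidableEq n] [RCLike 𝕜]

theorem posDef_of_sum_row_lt_diag {A : Matrix n n 𝕜} (hA : A.IsHermitian)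
    (hdom : ∀ i, ∑ j ∈ Finset.univ.erase i, ‖A i j‖ < RCLike.re (A i i)) : A.PosDef := by
  rw [hA.posDef_iff_eigenvalues_pos]
  intro i
  have heigen : Module.End.HasEigenvalue (toLin' A) (hA.eigenvalues i : 𝕜) := by
    rw [Module.End.hasEigenvalue_iff_mem_spectrum, spectrum_toLin', hA.spectrum_eq_image_range]
    exact ⟨_, ⟨i, rfl⟩, rfl⟩
  obtain ⟨k, hk⟩ := eigenvalue_mem_ball heigen
  rw [mem_closedBall_iff_norm'] at hk
  have hre : RCLike.re (A k k) - hA.eigenvalues i ≤ ‖A k k - hA.eigenvalues i‖ := by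
    simpa using RCLike.re_le_norm (A k k - hA.eigenvalues i)
  linarith [hdom k]

theorem posSemidef_one_add_of_mul_self_eq_one {F : Matrix n n 𝕜} (hF : F.IsHermitian)
    (hsq : F * F = 1) : (1 + F).PosSemidef := by
  have hsquare : 1 + F = (2⁻¹ : ℝ) • ((1 + F)ᴴ * (1 + F)) := by
    rw [conjTranspose_add, conjTranspose_one, hF.eq, mul_add, add_mul, add_mul, hsq]
    simp only [mul_one, one_mul]
    module
  rw [hsquare]
  exact (posSemidef_conjTranspose_mul_self _).smul (by norm_num)

theorem posDef_sub_smul_mul_self {G : Matrix n n 𝕜} {κ : ℝ} (hκ : 0 ≤ κ) (hG : G.PosDef)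
    (hκG : (1 - κ • G).PosDef) : (G - κ • (G * G)).PosDef := by
  have hsplit : G - κ • (G * G) =
      (1 - κ • G)ᴴ * G * (1 - κ • G) + κ • (Gᴴ * (1 - κ • G) * G) := by
    rw [hκG.isHermitian.eq, hG.isHermitian.eq]
    simp only [sub_mul, mul_sub, one_mul, mul_one, smul_mul_assoc, mul_smul_comm, smul_sub,
      mul_assoc]
    abel
  rw [hsplit]
  exact (hG.conjTranspose_mul_mul_same (mulVec_injective_of_isUnit hκG.isUnit)).add_posSemidef
    ((hκG.posSemidef.conjTranspose_mul_mul_same G).smul hκ)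

theorem posDef_one_kronecker_add_smul_sum {m : Type*} [Finite m] [DecidableEq m]
    {G : Matrix n n 𝕜} {F : n → Matrix m m 𝕜} {κ : ℝ} (hκ : 0 ≤ κ) (hG : G.PosDef)
    (hκG : (1 - κ • G).PosDef) (hF : ∀ k, (1 + F k).PosSemidef) :
    (1 ⊗ₖ G + κ • ∑ k, F k ⊗ₖ vecMulVec (G.col k) (star (G.col k))).PosDef := by
  have := Fintype.ofFinite m
  have hshift : 1 ⊗ₖ G + κ • ∑ k, F k ⊗ₖ vecMulVec (G.col k) (star (G.col k)) =
      1 ⊗ₖ (G - κ • (G * G)) +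
        κ • ∑ k, (1 + F k) ⊗ₖ vecMulVec (G.col k) (star (G.col k)) := by
    have hGG : (1 : Matrix m m 𝕜) ⊗ₖ (G * G) =
        ∑ k, 1 ⊗ₖ vecMulVec (G.col k) (star (G.col k)) := by
      rw [← congrArg (G * ·) hG.isHermitian.eq, ← sum_vecMulVec_col_star]
      exact map_sum (kroneckerBilinear (R := 𝕜) 1) _ _
    simp only [sub_eq_add_neg, ← neg_smul, kronecker_add, kronecker_smul, add_kronecker,
      Finset.sum_add_distrib, hGG]
    module
  rw [hshift]
  exact (PosDef.one.kronecker (posDef_sub_smul_mul_self hκ hG hκG)).add_posSemidef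
    ((posSemidef_sum _ fun k _ ↦ (hF k).kronecker (posSemidef_vecMulVec_self_star _)).smul hκ)

end PositiveDefinite

theorem abs_b (N : ℕ) : |b N| = a N := by
  simp [a, b, abs_pow, abs_inv]

theorem a_pos (N : ℕ) : 0 < a N := by
  unfold a; positivity

theorem c_pos (N : ℕ) : 0 < c N := by
  unfold c; positivity

theorem isHermitian_M1 (N : ℕ) : (M1 N).IsHermitian := by
  ext i j
  fin_cases i <;> fin_cases j <;> rfl

theorem M1_apply_self (N : ℕ) (i : Fin 3) : M1 N i i = 1 := by
  fin_cases i <;> rfl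

theorem abs_M1_apply_of_ne (N : ℕ) {i j : Fin 3} (hij : i ≠ j) : |M1 N i j| = a N := by
  fin_cases i <;> fin_cases j <;> simp_all [M1, abs_b, abs_of_pos (a_pos N)]

theorem posDef_smul_one_add_smul_M1 {N : ℕ} {s t : ℝ} (hst : |t| * (2 * a N) < s + t) :
    (s • 1 + t • M1 N).PosDef := by
  have hherm : (s • 1 + t • M1 N).IsHermitian :=
    (isHermitian_one.smul (.all s)).add ((isHermitian_M1 N).smul (.all t))
  refine posDef_of_sum_row_lt_diag hherm fun i ↦ ?_
  have hoff : ∀ j ∈ Finset.univ.erase i, ‖(s • 1 + t • M1 N) i j‖ = |t| * a N := by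
    intro j hj
    have hij := (Finset.ne_of_mem_erase hj).symm
    simp [hij, abs_M1_apply_of_ne N hij]
  rw [Finset.sum_congr rfl hoff]
  simpa [M1_apply_self, mul_left_comm] using hst

theorem posDef_M1 {N : ℕ} (hN : 2 ≤ N) : (M1 N).PosDef := by
  have ha : a N ≤ 2⁻¹ ^ 2 := pow_le_pow_of_le_one (by norm_num) (by norm_num) hN
  have hdom : |1| * (2 * a N) < 0 + 1 := by
    norm_num at ha ⊢
    linarith
  simpa using posDef_smul_one_add_smul_M1 hdom

theorem posDef_one_sub_smul_M1 {N : ℕ} (hN : 3 ≤ N) : (1 - (2 * c N) • M1 N).PosDef := by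
  have ha : a N ≤ 2⁻¹ ^ 3 := pow_le_pow_of_le_one (by norm_num) (by norm_num) hN
  have hc : c N ≤ (2 / 3) ^ 3 := pow_le_pow_of_le_one (by norm_num) (by norm_num) hN
  have hca : c N * a N ≤ (2 / 3) ^ 3 * 2⁻¹ ^ 3 :=
    mul_le_mul hc ha (a_pos N).le (by norm_num)
  have hdom : |-(2 * c N)| * (2 * a N) < 1 + -(2 * c N) := by
    rw [abs_neg, abs_of_pos (by linarith [c_pos N])]
    linarith
  simpa [sub_eq_add_neg] using posDef_smul_one_add_smul_M1 hdom

/-- The three reflections of the plane occurring in `T`: the `k`-th one is `zₖ σ_z + xₖ σ_x`,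
where `2 * c N * zₖ` and `2 * c N * xₖ` are the coefficients of the projector onto the `k`-th
single-click state in `Mz N` and `Mx N`. -/
noncomputable def clickReflection : Fin 3 → Matrix (Fin 2) (Fin 2) ℝ :=
  ![!![-1, 0; 0, 1],
    !![1 / 2, -(√3 / 2); -(√3 / 2), -(1 / 2)],
    !![1 / 2, √3 / 2; √3 / 2, -(1 / 2)]]

theorem isHermitian_clickReflection (k : Fin 3) : (clickReflection k).IsHermitian := by
  ext i j
  fin_cases k <;> fin_cases i <;> fin_cases j <;> rfl

theorem clickReflection_mul_self (k : Fin 3) : clickReflection k * clickReflection k = 1 := by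
  have hsqrt : √3 * √3 = 3 := Real.mul_self_sqrt (by norm_num)
  ext i j
  fin_cases k <;> fin_cases i <;> fin_cases j <;> simp [clickReflection] <;> linarith

theorem posSemidef_one_add_clickReflection (k : Fin 3) : (1 + clickReflection k).PosSemidef :=
  posSemidef_one_add_of_mul_self_eq_one (isHermitian_clickReflection k) (clickReflection_mul_self k)

/-- The projector onto the `k`-th single-click state, represented in the non-orthogonal basis of
the single-click states: `gₖ gₖᵀ` for the `k`-th column `gₖ` of the Gram matrix `M1 N`. -/
noncomputable def clickProjector (N : ℕ) (k : Fin 3) : Matrix (Fin 3) (Fin 3) ℝ :=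
  vecMulVec ((M1 N).col k) (star ((M1 N).col k))

theorem clickProjector_eq_single_add (N : ℕ) (k : Fin 3) :
    clickProjector N k = single k k 1 + ![δ1 N, δ2 N, δ3 N] k := by
  ext i j
  fin_cases k <;> fin_cases i <;> fin_cases j <;>
    simp [clickProjector, M1, δ1, δ2, δ3, vecMulVec_apply, sq, mul_comm]

theorem Mz_eq_smul_sum (N : ℕ) :
    Mz N = (2 * c N) • ∑ k, clickReflection k 0 0 • clickProjector N k := by
  have hdiag : (!![-2, 0, 0; 0, 1, 0; 0, 0, 1] : Matrix (Fin 3) (Fin 3) ℝ) =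
      (-2 : ℝ) • single 0 0 1 + single 1 1 1 + single 2 2 1 := by
    ext i j
    fin_cases i <;> fin_cases j <;> simp
  simp only [Mz, hdiag, Fin.sum_univ_three, clickProjector_eq_single_add, clickReflection,
    of_apply, cons_val]
  module

theorem Mx_eq_smul_sum (N : ℕ) :
    Mx N = (2 * c N) • ∑ k, clickReflection k 0 1 • clickProjector N k := by
  have hdiag : (!![0, 0, 0; 0, -1, 0; 0, 0, 1] : Matrix (Fin 3) (Fin 3) ℝ) =
      single 2 2 1 - single 1 1 1 := by
    ext i j
    fin_cases i <;> fin_cases j <;> simp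
  simp only [Mx, hdiag, Fin.sum_univ_three, clickProjector_eq_single_add, clickReflection,
    of_apply, cons_val]
  module

theorem S_zero : S 0 = 0 := by
  ext i j
  fin_cases i <;> fin_cases j <;> simp [S]

theorem T_zero_eq_submatrix (N : ℕ) :
    T N 0 = (1 ⊗ₖ M1 N + (2 * c N) • ∑ k, clickReflection k ⊗ₖ clickProjector N k).submatrix
      (Sum.elim (Prod.mk 0) (Prod.mk 1)) (Sum.elim (Prod.mk 0) (Prod.mk 1)) := by
  have hsymm : ∀ k, clickReflection k 1 0 = clickReflection k 0 1 := fun k ↦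
    (isHermitian_clickReflection k).apply 0 1
  have htrace : ∀ k, clickReflection k 1 1 = -clickReflection k 0 0 := by
    intro k
    fin_cases k <;> simp [clickReflection]
  ext (i | i) (j | j) <;>
    simp [T, S_zero, Mz_eq_smul_sum, Mx_eq_smul_sum, Matrix.sum_apply, hsymm, htrace,
      sub_eq_add_neg]

theorem stmt_1_general (N : ℕ) (hN : 3 ≤ N) : (T N 0).PosDef := by
  have hκ : 0 ≤ 2 * c N := by linarith [c_pos N]
  have hM1 : (M1 N).PosDef := posDef_M1 (by omega)
  have hsub : (1 - (2 * c N) • M1 N).PosDef := posDef_one_sub_smul_M1 hN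
  rw [T_zero_eq_submatrix]
  exact (posDef_one_kronecker_add_smul_sum hκ hM1 hsub
    posSemidef_one_add_clickReflection).submatrix (by rintro (i | i) (j | j) <;> simp)

theorem stmt_1 (N : ℕ) (hN : 6 ≤ N) : (T N 0).PosDef :=
  stmt_1_general N (by omega)
end

section
/- For every natural number N ≥ 2, there exists x = (x₁,x₂,x₃) ∈ ℝ³ such that the 6×6 real matrix T_N(x) is positive definite. -/
open Matrix

/-!
At `x = 0` the matrix is `T = A + 2 c A R A`, where `A = M₁ ⊕ M₁` and `R` is the direct sum of the
three plane reflections attached to the trine. The eigenvalues of `M₁` are `1 + 2 b`, on the line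
spanned by the sign vector `((-1)^N, 1, 1)`, and `1 - b`; let `P` be the projection onto the two
copies of this line. Since the trine sums to zero, `P R P = 0`, so `R` interchanges the range of `P`
with a subspace orthogonal to it. Thus `A⁻¹ + 2 c R` splits into blocks
`[[(1 + 2 b)⁻¹, 2 c], [2 c, (1 - b)⁻¹]]` on the sum of these two subspaces and is bounded below by
`(1 - b)⁻¹ - 2 c` on the complement. Both are positive because `2 c (1 - b) < 1` and
`4 c² (1 + 2 b) (1 - b) < 1` for `N ≥ 2`.
-/

section ReflectedProjection

open scoped ComplexOrder

variable {n 𝕜 : Type*} [Fintype n] [DecidableEq n] [RCLike 𝕜] {P R : Matrix n n 𝕜}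

lemma posSemidef_smul_one_add_smul_involution (hR : R.IsHermitian) (hRR : R * R = 1)
    {β γ : ℝ} (hγ : |γ| ≤ β) : (β • (1 : Matrix n n 𝕜) + γ • R).PosSemidef := by
  obtain ⟨hneg, hpos⟩ := abs_le.mp hγ
  have gram_decomposition : β • (1 : Matrix n n 𝕜) + γ • R =
      ((β + γ) / 4) • ((1 + R)ᴴ * (1 + R)) + ((β - γ) / 4) • ((1 - R)ᴴ * (1 - R)) := by
    simp only [conjTranspose_add, conjTranspose_sub, conjTranspose_one, hR.eq, add_mul, mul_add,
      sub_mul, mul_sub, one_mul, mul_one, hRR]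
    module
  rw [gram_decomposition]
  exact ((posSemidef_conjTranspose_mul_self _).smul (by linarith)).add
    ((posSemidef_conjTranspose_mul_self _).smul (by linarith))

lemma posSemidef_smul_projection_add_smul_involution (hP : IsStarProjection P) (hR : R.IsHermitian)
    (hRR : R * R = 1) (hPRP : P * R * P = 0) {α β γ : ℝ} (hβ : 0 < β) (hγ : |γ| ≤ β)
    (hγ_sq : γ ^ 2 ≤ α * β) : (α • P + β • (1 - P) + γ • R).PosSemidef := by
  have hP_adj : Pᴴ = P := hP.isSelfAdjoint
  have hPP : P * P = P := hP.isIdempotentElem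
  have hPP' (X : Matrix n n 𝕜) : P * (P * X) = P * X := by rw [← mul_assoc, hPP]
  have hRR' (X : Matrix n n 𝕜) : R * (R * X) = X := by rw [← mul_assoc, hRR, one_mul]
  have hPRP' (X : Matrix n n 𝕜) : P * (R * (P * X)) = 0 := by
    rw [← mul_assoc, ← mul_assoc, hPRP, zero_mul]
  rw [mul_assoc] at hPRP
  obtain ⟨t, rfl⟩ : ∃ t, γ = β * t := ⟨γ / β, by field_simp⟩
  have ht : 0 ≤ α - β * t ^ 2 := by nlinarith
  -- `K` completes the square on the ranges of `P` and `R * P * R`, which `R` interchanges; `Q` is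
  -- the projection onto the orthogonal complement of both, and it commutes with `R`.
  set K : Matrix n n 𝕜 := P * R + t • P with hK
  set Q : Matrix n n 𝕜 := 1 - P - R * P * R with hQ
  have complete_square : α • P + β • (1 - P) + (β * t) • R = (α - β * t ^ 2) • (Pᴴ * P)
      + β • (Kᴴ * K) + Qᴴ * (β • (1 : Matrix n n 𝕜) + (β * t) • R) * Q := by
    simp only [hK, hQ, conjTranspose_add, conjTranspose_sub, conjTranspose_one, conjTranspose_mul,
      conjTranspose_smul, star_trivial, hP_adj, hR.eq, add_mul, mul_add, sub_mul, mul_sub, one_mul,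
      mul_one, smul_mul_assoc, mul_smul_comm, mul_assoc, hPP, hPP', hRR, hRR', hPRP, hPRP',
      mul_zero]
    module
  rw [complete_square]
  exact (((posSemidef_conjTranspose_mul_self P).smul ht).add
    ((posSemidef_conjTranspose_mul_self K).smul hβ.le)).add
    ((posSemidef_smul_one_add_smul_involution hR hRR hγ).conjTranspose_mul_mul_same Q)

lemma posDef_smul_projection_add_smul_involution (hP : IsStarProjection P) (hR : R.IsHermitian)
    (hRR : R * R = 1) (hPRP : P * R * P = 0) {α β γ : ℝ} (hγ : |γ| < β)
    (hγ_sq : γ ^ 2 < α * β) : (α • P + β • (1 - P) + γ • R).PosDef := by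
  have hβ : 0 < β := (abs_nonneg γ).trans_lt hγ
  have hα : 0 < α := pos_of_mul_pos_left ((sq_nonneg γ).trans_lt hγ_sq) hβ.le
  obtain ⟨ε, hε, hεmin⟩ : ∃ ε, 0 < ε ∧ ε < min (β - |γ|) ((α * β - γ ^ 2) / (α + β)) :=
    exists_between (lt_min (by linarith) (by apply div_pos <;> linarith))
  obtain ⟨hε_abs, hε_sq⟩ := lt_min_iff.mp hεmin
  rw [lt_div_iff₀ (by positivity)] at hε_sq
  -- Both hypotheses being strict, they leave room to split off `ε • 1`.
  have hshift : (ε • (1 : Matrix n n 𝕜)).PosDef := PosDef.one.smul hε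
  have hrest := posSemidef_smul_projection_add_smul_involution hP hR hRR hPRP (α := α - ε)
    (β := β - ε) (γ := γ) (by linarith [abs_nonneg γ]) (by linarith) (by nlinarith)
  convert hshift.add_posSemidef hrest using 1
  module

lemma posDef_add_smul_mul_involution_mul (hP : IsStarProjection P) (hR : R.IsHermitian)
    (hRR : R * R = 1) (hPRP : P * R * P = 0) {A : Matrix n n 𝕜} {μ ν γ : ℝ} (hμ : 0 < μ)
    (hν : 0 < ν) (hA : A = μ • P + ν • (1 - P)) (hγ : |γ| * ν < 1) (hγ_sq : γ ^ 2 * (μ * ν) < 1) :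
    (A + γ • (A * R * A)).PosDef := by
  have hA_adj : star A = A := by
    rw [hA]
    exact ((IsSelfAdjoint.all μ).smul hP.isSelfAdjoint).add
      ((IsSelfAdjoint.all ν).smul hP.one_sub.isSelfAdjoint)
  set B : Matrix n n 𝕜 := μ⁻¹ • P + ν⁻¹ • (1 - P) with hB
  have hAB : A * B = 1 := by
    simp only [hA, hB, add_mul, mul_add, smul_mul_assoc, mul_smul_comm,
      hP.isIdempotentElem.eq, hP.one_sub.isIdempotentElem.eq, hP.mul_one_sub_self,
      hP.one_sub_mul_self, smul_zero, add_zero, zero_add, inv_smul_smul₀ hμ.ne',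
      inv_smul_smul₀ hν.ne', add_sub_cancel]
  have hfactor : A + γ • (A * R * A) = star A * (B + γ • R) * A := by
    rw [hA_adj, mul_add, hAB, add_mul, one_mul, mul_smul_comm, smul_mul_assoc]
  rw [hfactor, (IsUnit.of_mul_eq_one B hAB).posDef_star_left_conjugate_iff, hB]
  apply posDef_smul_projection_add_smul_involution hP hR hRR hPRP
  · rwa [← one_div, lt_div_iff₀ hν]
  · rwa [← mul_inv, ← one_div, lt_div_iff₀ (by positivity)]

end ReflectedProjection

section SignProjection

variable {n : Type*} [Fintype n]

/-- The matrix `(1 / n) s sᵀ`; for a vector `s` of signs it is the orthogonal projection onto the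
line spanned by `s`. -/
noncomputable def signProjection (s : n → ℝ) : Matrix n n ℝ :=
  (Fintype.card n : ℝ)⁻¹ • vecMulVec s s

lemma signProjection_mul_diagonal_mul_signProjection [DecidableEq n] {s : n → ℝ}
    (hs : ∀ i, s i ^ 2 = 1) (w : n → ℝ) : signProjection s * diagonal w * signProjection s =
      ((Fintype.card n : ℝ)⁻¹ * ∑ i, w i) • signProjection s := by
  have hdot : (s ᵥ* diagonal w) ⬝ᵥ s = ∑ i, w i := by
    simp only [dotProduct, vecMul_diagonal]
    exact Finset.sum_congr rfl fun i _ ↦ by linear_combination w i * hs i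
  simp only [signProjection, smul_mul_assoc, mul_smul_comm, vecMulVec_mul s s (diagonal w),
    vecMulVec_mul_vecMulVec, hdot, vecMulVec_smul]
  module

lemma isStarProjection_signProjection [Nonempty n] {s : n → ℝ} (hs : ∀ i, s i ^ 2 = 1) :
    IsStarProjection (signProjection s) where
  isIdempotentElem := by
    classical
    simpa [IsIdempotentElem] using signProjection_mul_diagonal_mul_signProjection hs 1
  isSelfAdjoint := by
    simp [IsSelfAdjoint, star_eq_conjTranspose, signProjection]

end SignProjection

section Blocks

variable {n : Type*}

lemma isStarProjection_fromBlocks_diagonal {α : Type*} [NonUnitalSemiring α] [StarRing α]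
    [Fintype n] {P : Matrix n n α} (hP : IsStarProjection P) :
    IsStarProjection (fromBlocks P 0 0 P) where
  isIdempotentElem := by
    simp [IsIdempotentElem, fromBlocks_multiply, hP.isIdempotentElem.eq]
  isSelfAdjoint := by
    have hP_adj : Pᴴ = P := hP.isSelfAdjoint
    rw [IsSelfAdjoint, star_eq_conjTranspose, fromBlocks_conjTranspose, hP_adj,
      conjTranspose_zero]

variable [DecidableEq n]

/-- The direct sum over `i` of the `2 × 2` matrices `[[p i, q i], [q i, -p i]]`, which are
reflections of the plane when `p i ^ 2 + q i ^ 2 = 1`. -/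
def blockReflection (p q : n → ℝ) : Matrix (n ⊕ n) (n ⊕ n) ℝ :=
  fromBlocks (diagonal p) (diagonal q) (diagonal q) (-diagonal p)

lemma isHermitian_blockReflection (p q : n → ℝ) : (blockReflection p q).IsHermitian :=
  (isHermitian_diagonal p).fromBlocks (isHermitian_diagonal q) (isHermitian_diagonal p).neg

variable [Fintype n]

lemma blockReflection_mul_self {p q : n → ℝ} (hpq : ∀ i, p i ^ 2 + q i ^ 2 = 1) :
    blockReflection p q * blockReflection p q = 1 := by
  have hdiag : diagonal p * diagonal p + diagonal q * diagonal q = 1 := by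
    simp [← pow_two (_ : ℝ), hpq]
  have hcomm : diagonal q * diagonal p = diagonal p * diagonal q := by
    simp [mul_comm]
  simp [blockReflection, fromBlocks_multiply, hdiag, hcomm, add_comm (diagonal q * diagonal q),
    -diagonal_mul_diagonal, -diagonal_neg]

lemma fromBlocks_signProjection_mul_blockReflection_mul {s p q : n → ℝ} (hs : ∀ i, s i ^ 2 = 1)
    (hp : ∑ i, p i = 0) (hq : ∑ i, q i = 0) :
    fromBlocks (signProjection s) 0 0 (signProjection s) * blockReflection p q *
      fromBlocks (signProjection s) 0 0 (signProjection s) = 0 := by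
  simp [blockReflection, fromBlocks_multiply, hp, hq,
    signProjection_mul_diagonal_mul_signProjection hs]

end Blocks

section Squashing

lemma a_eq_neg_one_pow_mul_b (N : ℕ) : a N = (-1) ^ N * b N := by
  rw [a, b, ← mul_pow]
  norm_num

lemma c_mul_b (N : ℕ) : c N * b N = (-1 / 3) ^ N := by
  rw [b, c, ← mul_pow]
  norm_num

/-- The sign vector spanning the eigenspace of `M1 N` for the eigenvalue `1 + 2 * b N`; its
complement is the eigenspace for the double eigenvalue `1 - b N`. -/
def signs (N : ℕ) : Fin 3 → ℝ := ![(-1) ^ N, 1, 1]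

lemma signs_sq (N : ℕ) (i : Fin 3) : signs N i ^ 2 = 1 := by
  fin_cases i <;> simp [signs, ← pow_mul]

lemma M1_eq_signProjection (N : ℕ) : M1 N =
    (1 + 2 * b N) • signProjection (signs N) + (1 - b N) • (1 - signProjection (signs N)) := by
  have hsign : ((-1 : ℝ) ^ N) * (-1) ^ N = 1 := by simp [← mul_pow]
  ext i j
  fin_cases i <;> fin_cases j <;>
    simp [M1, signProjection, signs, hsign, a_eq_neg_one_pow_mul_b] <;> ring

/-- The first coordinates of the trine, three plane unit vectors with mutual angles `2 * π / 3`;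
they are the diagonal of `Mz` at `a = b = 0`, normalised by `2 * c N`. -/
noncomputable def trineZ : Fin 3 → ℝ := ![-1, 1 / 2, 1 / 2]

/-- The second coordinates of the trine, which give the diagonal of `Mx` in the same way. -/
noncomputable def trineX : Fin 3 → ℝ := ![0, -(√3 / 2), √3 / 2]

lemma trine_sq_add_sq (i : Fin 3) : trineZ i ^ 2 + trineX i ^ 2 = 1 := by
  fin_cases i <;> simp [trineZ, trineX, div_pow] <;> norm_num

lemma sum_trineZ : ∑ i, trineZ i = 0 := by
  rw [Fin.sum_univ_three]
  change (-1 : ℝ) + 1 / 2 + 1 / 2 = 0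
  norm_num

lemma sum_trineX : ∑ i, trineX i = 0 := by
  simp [trineX, Fin.sum_univ_three]

lemma Mz_eq (N : ℕ) : Mz N = (2 * c N) • (M1 N * diagonal trineZ * M1 N) := by
  ext i j
  rw [Matrix.smul_apply, mul_apply, Fin.sum_univ_three]
  simp only [mul_diagonal]
  fin_cases i <;> fin_cases j <;> simp [Mz, M1, δ1, δ2, δ3, trineZ] <;> ring

lemma Mx_eq (N : ℕ) : Mx N = (2 * c N) • (M1 N * diagonal trineX * M1 N) := by
  ext i j
  rw [Matrix.smul_apply, mul_apply, Fin.sum_univ_three]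
  simp only [mul_diagonal]
  fin_cases i <;> fin_cases j <;> simp [Mx, M1, δ2, δ3, trineX, -mul_eq_zero, -zero_eq_mul] <;> ring

lemma T_zero_eq (N : ℕ) : T N 0 = fromBlocks (M1 N) 0 0 (M1 N) + (2 * c N) •
    (fromBlocks (M1 N) 0 0 (M1 N) * blockReflection trineZ trineX *
      fromBlocks (M1 N) 0 0 (M1 N)) := by
  have hS : S 0 = 0 := by
    ext i j
    fin_cases i <;> fin_cases j <;> simp [S]
  simp [T, hS, blockReflection, fromBlocks_multiply, fromBlocks_smul, fromBlocks_add, Mz_eq, Mx_eq,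
    sub_eq_add_neg, -diagonal_neg]

lemma fromBlocks_M1_eq (N : ℕ) : fromBlocks (M1 N) 0 0 (M1 N) =
    (1 + 2 * b N) • fromBlocks (signProjection (signs N)) 0 0 (signProjection (signs N)) +
      (1 - b N) • (1 - fromBlocks (signProjection (signs N)) 0 0 (signProjection (signs N))) := by
  simp [M1_eq_signProjection N, ← fromBlocks_one, fromBlocks_smul, fromBlocks_add, sub_eq_add_neg,
    fromBlocks_neg]

variable {N : ℕ}

lemma c_nonneg (N : ℕ) : 0 ≤ c N := by
  rw [c]
  positivity

lemma c_le (hN : 2 ≤ N) : c N ≤ 4 / 9 :=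
  (pow_le_pow_of_le_one (by norm_num) (by norm_num) hN).trans_eq (by norm_num)

lemma abs_b_le (hN : 2 ≤ N) : |b N| ≤ 1 / 4 := by
  rw [b, abs_pow]
  exact (pow_le_pow_of_le_one (by norm_num) (by norm_num) hN).trans_eq (by norm_num)

lemma c_mul_b_le (hN : 2 ≤ N) : c N * b N ≤ 1 / 9 :=
  calc c N * b N ≤ c N * (1 / 4) :=
        mul_le_mul_of_nonneg_left ((le_abs_self _).trans (abs_b_le hN)) (c_nonneg N)
    _ ≤ 1 / 9 := by linarith [c_le hN]

lemma le_c_mul_b (hN : 2 ≤ N) : -(1 / 27) ≤ c N * b N := by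
  rw [c_mul_b]
  rcases hN.eq_or_lt with rfl | hN3
  · norm_num
  · refine neg_le_of_abs_le ?_
    rw [abs_pow]
    exact (pow_le_pow_of_le_one (by norm_num) (by norm_num) hN3).trans_eq (by norm_num)

lemma abs_two_mul_c_mul_lt_one (hN : 2 ≤ N) : |2 * c N| * (1 - b N) < 1 := by
  rw [abs_of_nonneg (by linarith [c_nonneg N])]
  linarith [c_le hN, le_c_mul_b hN]

lemma sq_two_mul_c_mul_lt_one (hN : 2 ≤ N) :
    (2 * c N) ^ 2 * ((1 + 2 * b N) * (1 - b N)) < 1 := by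
  have hc := c_le hN
  have hc_sq : c N ^ 2 ≤ (4 / 9) ^ 2 := pow_le_pow_left₀ (c_nonneg N) hc 2
  have hcross : c N * (c N * b N) ≤ 4 / 9 * (1 / 9) := by
    nlinarith [c_nonneg N, c_mul_b_le hN]
  nlinarith [sq_nonneg (c N * b N)]

end Squashing

theorem stmt_3 (N : ℕ) (hN : 2 ≤ N) :
    ∃ x : Fin 3 → ℝ, (T N x).PosDef := by
  obtain ⟨hb_lower, hb_upper⟩ := abs_le.mp (abs_b_le hN)
  refine ⟨0, ?_⟩
  rw [T_zero_eq]
  exact posDef_add_smul_mul_involution_mul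
    (isStarProjection_fromBlocks_diagonal (isStarProjection_signProjection (signs_sq N)))
    (isHermitian_blockReflection trineZ trineX)
    (blockReflection_mul_self trine_sq_add_sq)
    (fromBlocks_signProjection_mul_blockReflection_mul (signs_sq N) sum_trineZ sum_trineX)
    (by linarith) (by linarith) (fromBlocks_M1_eq N)
    (abs_two_mul_c_mul_lt_one hN) (sq_two_mul_c_mul_lt_one hN)
end
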